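/- Let s = (s_k)_{k∈ℕ} be a sequence of non-negative reals with ∑_{k=1}^∞ s_k = ∞. For A ⊆ ℕ let d_s(A) = limsup_{k→∞} (∑_{i∈A, i≤k} s_i) / (∑_{i=1}^k s_i), and let ℰ𝒰^s = {ℕ ∖ A : d_s(A) = 0} be the Erdős–Ulam filter. Then ℰ𝒰^s is conglomerated; in particular, it is not generated by any statistical measure. -/

import Mathlib

/-!
Let `S k = ∑ i < k, s i`, which tends to infinity. Choose cut points `0 = k 0 < k 1 < ...` with
`2 * S (k n) ≤ S (k (n + 1))` and `0 < S (k (n + 1))`, and let `D n` be the block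
`[k n, k (n + 1))`. Each block is finite, hence has density zero, but at the cut point `k (n + 1)`
it carries at least half of the total mass, so a union of infinitely many blocks has upper density
at least `1 / 2` (`exists_conglomerating_sequence`).

If a statistical measure `μ` generated the filter, then `M ↦ μ (⋃ n ∈ M, D n)` would be a finitely
additive set function vanishing on points and positive on all infinite sets. There is none
(`exists_infinite_null`): an uncountable almost disjoint family of infinite sets would give
infinitely many sets of measure above a fixed `ε > 0` whose pairwise intersections are null,
contradicting the finiteness of the total mass.
-/


/-- A statistical measure on ℕ: a non-negative finitely additive set function
with `μ ℕ = 1` and `μ {k} = 0` for every `k`. -/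
def IsStatMeasure (μ : Set ℕ → ℝ) : Prop :=
  (∀ A : Set ℕ, 0 ≤ μ A) ∧
  (∀ A B : Set ℕ, Disjoint A B → μ (A ∪ B) = μ A + μ B) ∧
  μ Set.univ = 1 ∧
  (∀ k : ℕ, μ {k} = 0)

/-- The upper `s`-density of a set `A ⊆ ℕ`:
`d_s(A) = limsup_k (∑_{i ∈ A, i < k} s_i) / (∑_{i < k} s_i)`. -/
noncomputable def upperDensity (s : ℕ → ℝ) (A : Set ℕ) : ℝ :=
  Filter.limsup
    (fun k => (∑ i ∈ Finset.range k, Set.indicator A s i) / (∑ i ∈ Finset.range k, s i))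
    Filter.atTop

open Filter Topology

/-! ### Finitely additive set functions -/

section Additive

variable {ν : Set ℕ → ℝ}

lemma additive_empty (hadd : ∀ A B : Set ℕ, Disjoint A B → ν (A ∪ B) = ν A + ν B) : ν ∅ = 0 := by
  have h := hadd ∅ ∅ (by simp)
  simp at h
  exact h

lemma additive_mono (hnn : ∀ A, 0 ≤ ν A)
    (hadd : ∀ A B : Set ℕ, Disjoint A B → ν (A ∪ B) = ν A + ν B) {A B : Set ℕ} (hAB : A ⊆ B) :
    ν A ≤ ν B := by
  have h := hadd A (B \ A) Set.disjoint_sdiff_right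
  rw [Set.union_sdiff_cancel hAB] at h
  linarith [hnn (B \ A)]

lemma additive_finite (hadd : ∀ A B : Set ℕ, Disjoint A B → ν (A ∪ B) = ν A + ν B)
    (hpt : ∀ k, ν {k} = 0) {A : Set ℕ} (hA : A.Finite) : ν A = 0 := by
  induction A, hA using Set.Finite.induction_on with
  | empty => exact additive_empty hadd
  | @insert a A ha _ ih =>
    rw [Set.insert_eq, hadd _ _ (by simpa using ha), hpt, ih, add_zero]

lemma additive_of_inter_null (hadd : ∀ A B : Set ℕ, Disjoint A B → ν (A ∪ B) = ν A + ν B)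
    {A B : Set ℕ} (h0 : ν (A ∩ B) = 0) : ν (A ∪ B) = ν A + ν B := by
  have h1 := hadd A (B \ A) Set.disjoint_sdiff_right
  have h2 := hadd (B ∩ A) (B \ A) (Set.disjoint_sdiff_right.mono_left Set.inter_subset_right)
  rw [Set.union_sdiff_self] at h1
  rw [Set.inter_union_sdiff, Set.inter_comm, h0] at h2
  linarith

/-- The graph of `n ↦ ⌊n * x⌋`, coded as a set of natural numbers. For varying real `x` these sets
form an uncountable almost disjoint family. -/
noncomputable def branch (x : ℝ) : Set ℕ :=
  Set.range fun n : ℕ => Encodable.encode ((n, ⌊n * x⌋) : ℕ × ℤ)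

lemma branch_infinite (x : ℝ) : (branch x).Infinite := by
  apply Set.infinite_range_of_injective
  intro m n h
  have h' := Encodable.encode_injective h
  exact (Prod.ext_iff.mp h').1

lemma branch_inter_finite {x y : ℝ} (hxy : x ≠ y) : (branch x ∩ branch y).Finite := by
  obtain ⟨N, hN⟩ := exists_nat_gt (1 / |x - y|)
  have hpos : 0 < |x - y| := abs_pos.mpr (sub_ne_zero.mpr hxy)
  refine ((Set.finite_Iio N).image
    fun n : ℕ => Encodable.encode ((n, ⌊n * x⌋) : ℕ × ℤ)).subset ?_
  rintro _ ⟨⟨n, rfl⟩, ⟨m, hm⟩⟩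
  have h' := Prod.ext_iff.mp (Encodable.encode_injective hm)
  obtain ⟨h1, h2⟩ := h'
  simp only at h1 h2
  subst h1
  refine ⟨m, ?_, rfl⟩
  -- Equal integer parts force `m * |x - y| < 1`.
  have hlt : |(m : ℝ) * y - m * x| < 1 := Int.abs_sub_lt_one_of_floor_eq_floor h2
  rw [← mul_sub, abs_mul, Nat.abs_cast, abs_sub_comm] at hlt
  have : (m : ℝ) < 1 / |x - y| := by rwa [lt_div_iff₀ hpos]
  exact_mod_cast this.trans hN

lemma additive_biUnion_branch (hadd : ∀ A B : Set ℕ, Disjoint A B → ν (A ∪ B) = ν A + ν B)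
    (hpt : ∀ k, ν {k} = 0) (F : Finset ℝ) :
    ν (⋃ x ∈ F, branch x) = ∑ x ∈ F, ν (branch x) := by
  classical
  induction F using Finset.induction_on with
  | empty => simpa using additive_empty hadd
  | @insert a F ha ih =>
    rw [Finset.set_biUnion_insert, Finset.sum_insert ha, ← ih]
    apply additive_of_inter_null hadd
    apply additive_finite hadd hpt
    rw [Set.inter_iUnion₂]
    refine F.finite_toSet.biUnion fun x hx => branch_inter_finite ?_
    rintro rfl
    exact ha hx

lemma exists_infinite_null (hnn : ∀ A, 0 ≤ ν A)
    (hadd : ∀ A B : Set ℕ, Disjoint A B → ν (A ∪ B) = ν A + ν B)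
    (hpt : ∀ k, ν {k} = 0) : ∃ M : Set ℕ, M.Infinite ∧ ν M = 0 := by
  by_contra! hcon
  have hpos : ∀ x, 0 < ν (branch x) := fun x =>
    lt_of_le_of_ne (hnn _) (hcon _ (branch_infinite x)).symm
  -- Only finitely many branches have measure at least `1 / (n + 1)`.
  have hfin : ∀ n : ℕ, {x : ℝ | 1 / ((n : ℝ) + 1) ≤ ν (branch x)}.Finite := by
    intro n
    by_contra hinf
    obtain ⟨N, hN⟩ := exists_nat_gt (ν Set.univ * (n + 1))
    obtain ⟨F, hF, hcard⟩ := Set.Infinite.exists_subset_card_eq hinf N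
    have h1 : (N : ℝ) * (1 / ((n : ℝ) + 1)) ≤ ∑ x ∈ F, ν (branch x) := by
      rw [← hcard, ← nsmul_eq_mul]
      exact Finset.card_nsmul_le_sum _ _ _ fun x hx => hF hx
    rw [← additive_biUnion_branch hadd hpt] at h1
    have h2 := h1.trans (additive_mono hnn hadd (Set.subset_univ _))
    rw [mul_one_div, div_le_iff₀ (by positivity)] at h2
    linarith
  have hcount : (Set.univ : Set ℝ).Countable := by
    refine (Set.countable_iUnion fun n => (hfin n).countable).mono fun x _ => ?_
    obtain ⟨n, hn⟩ := exists_nat_one_div_lt (hpos x)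
    exact Set.mem_iUnion.mpr ⟨n, hn.le⟩
  exact Cardinal.not_countable_real hcount

end Additive

/-! ### Upper density -/

section Density

variable {s : ℕ → ℝ}

lemma ratio_mem_Icc (hs : ∀ k, 0 ≤ s k) (A : Set ℕ) (k : ℕ) :
    (∑ i ∈ Finset.range k, A.indicator s i) / (∑ i ∈ Finset.range k, s i) ∈ Set.Icc (0 : ℝ) 1 :=
  ⟨div_nonneg (Finset.sum_nonneg fun i _ => Set.indicator_nonneg (fun i _ => hs i) i)
      (Finset.sum_nonneg fun i _ => hs i),
    div_le_one_of_le₀ (Finset.sum_le_sum fun i _ => Set.indicator_le_self' (fun i _ => hs i) i)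
      (Finset.sum_nonneg fun i _ => hs i)⟩

lemma tendsto_partial_sums (hs : ∀ k, 0 ≤ s k) (hdiv : ¬ Summable s) :
    Tendsto (fun k => ∑ i ∈ Finset.range k, s i) atTop atTop :=
  (not_summable_iff_tendsto_nat_atTop_of_nonneg hs).mp hdiv

lemma upperDensity_finite (hs : ∀ k, 0 ≤ s k) (hdiv : ¬ Summable s) {A : Set ℕ} (hA : A.Finite) :
    upperDensity s A = 0 := by
  apply Tendsto.limsup_eq
  have hsum : Summable (A.indicator s) :=
    summable_of_hasFiniteSupport (hA.subset Set.support_indicator_subset)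
  exact hsum.hasSum.tendsto_sum_nat.div_atTop (tendsto_partial_sums hs hdiv)

lemma exists_cut_points (hs : ∀ k, 0 ≤ s k) (hdiv : ¬ Summable s) :
    ∃ k : ℕ → ℕ, StrictMono k ∧ ∀ n, 0 < ∑ i ∈ Finset.range (k (n + 1)), s i ∧
      2 * ∑ i ∈ Finset.range (k n), s i ≤ ∑ i ∈ Finset.range (k (n + 1)), s i := by
  have hstep : ∀ m : ℕ, ∃ m' : ℕ, m < m' ∧ 0 < ∑ i ∈ Finset.range m', s i ∧
      2 * ∑ i ∈ Finset.range m, s i ≤ ∑ i ∈ Finset.range m', s i := by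
    intro m
    have hT := tendsto_partial_sums hs hdiv
    obtain ⟨m', h1, h2, h3⟩ := ((eventually_gt_atTop m).and ((hT.eventually_gt_atTop 0).and
      (hT.eventually_ge_atTop (2 * ∑ i ∈ Finset.range m, s i)))).exists
    exact ⟨m', h1, h2, h3⟩
  choose f hf using hstep
  refine ⟨fun n => f^[n] 0, strictMono_nat_of_lt_succ fun n => ?_, fun n => ?_⟩
  · rw [Function.iterate_succ_apply']
    exact (hf _).1
  · simp only [Function.iterate_succ_apply']
    exact (hf _).2

lemma exists_conglomerating_sequence (hs : ∀ k, 0 ≤ s k) (hdiv : ¬ Summable s) :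
    ∃ D : ℕ → Set ℕ, Pairwise (Function.onFun Disjoint D) ∧
      (∀ n, upperDensity s (D n) = 0) ∧
      ∀ M : Set ℕ, M.Infinite → 0 < upperDensity s (⋃ n ∈ M, D n) := by
  obtain ⟨k, hk, hkS⟩ := exists_cut_points hs hdiv
  refine ⟨fun n => Set.Ico (k n) (k (n + 1)), hk.monotone.pairwise_disjoint_on_Ico_succ,
    fun n => upperDensity_finite hs hdiv (Set.finite_Ico _ _), fun M hM => ?_⟩
  refine lt_of_lt_of_le (by norm_num : (0 : ℝ) < 1 / 2) ?_
  apply le_limsup_of_frequently_le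
  · rw [frequently_atTop]
    intro a
    obtain ⟨n, hnM, hn⟩ := hM.exists_gt a
    refine ⟨k (n + 1), (hn.le.trans (Nat.le_succ n)).trans hk.le_apply, ?_⟩
    obtain ⟨hpos, hdouble⟩ := hkS n
    rw [le_div_iff₀ hpos]
    have hle : k n ≤ k (n + 1) := hk.monotone (Nat.le_succ n)
    have hsplit := Finset.sum_range_add_sum_Ico s hle
    have hblock : ∑ i ∈ Finset.Ico (k n) (k (n + 1)), s i ≤ ∑ i ∈ Finset.range (k (n + 1)),
        (⋃ n ∈ M, Set.Ico (k n) (k (n + 1))).indicator s i := by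
      calc ∑ i ∈ Finset.Ico (k n) (k (n + 1)), s i
          = ∑ i ∈ Finset.Ico (k n) (k (n + 1)),
              (⋃ n ∈ M, Set.Ico (k n) (k (n + 1))).indicator s i := by
            refine Finset.sum_congr rfl fun i hi => (Set.indicator_of_mem ?_ s).symm
            exact Set.mem_biUnion hnM (Finset.mem_Ico.mp hi)
        _ ≤ _ := by
            apply Finset.sum_le_sum_of_subset_of_nonneg
            · intro i hi
              exact Finset.mem_range.mpr (Finset.mem_Ico.mp hi).2
            · exact fun i _ _ => Set.indicator_nonneg (fun i _ => hs i) i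
    linarith
  · exact isBoundedUnder_of ⟨1, fun j => (ratio_mem_Icc hs _ j).2⟩

end Density

/-- For a sequence `s` of non-negative reals with `∑ s_k = ∞`, the Erdős–Ulam filter
`ℰ𝒰^s = {A : d_s(ℕ ∖ A) = 0}` is conglomerated: there is a disjoint sequence `D n` of
sets of its ideal (i.e. with `d_s (D n) = 0`) such that the union of any infinite
subfamily lies in the grill (i.e. has positive upper `s`-density).
In particular, `ℰ𝒰^s` is not generated by any statistical measure. -/
theorem stmt_6 (s : ℕ → ℝ) (hs : ∀ k, 0 ≤ s k) (hdiv : ¬ Summable s) :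
    (∃ D : ℕ → Set ℕ, Pairwise (Function.onFun Disjoint D) ∧
      (∀ n, upperDensity s (D n) = 0) ∧
      ∀ M : Set ℕ, M.Infinite → 0 < upperDensity s (⋃ n ∈ M, D n)) ∧
    ¬ ∃ μ : Set ℕ → ℝ, IsStatMeasure μ ∧
      ∀ A : Set ℕ, upperDensity s Aᶜ = 0 ↔ μ A = 1 := by
  obtain ⟨D, hdisj, hzero, hpos⟩ := exists_conglomerating_sequence hs hdiv
  refine ⟨⟨D, hdisj, hzero, hpos⟩, ?_⟩
  rintro ⟨μ, ⟨hnn, hadd, huniv, -⟩, hgen⟩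
  have hnull : ∀ A : Set ℕ, upperDensity s A = 0 ↔ μ A = 0 := by
    intro A
    have h1 := hgen Aᶜ
    have h2 := hadd A Aᶜ disjoint_compl_right
    rw [Set.union_compl_self, huniv] at h2
    rw [compl_compl] at h1
    rw [h1]
    constructor <;> intro h <;> linarith
  obtain ⟨M, hM, hM0⟩ := exists_infinite_null (ν := fun M => μ (⋃ n ∈ M, D n))
    (fun _ => hnn _)
    (fun A B hAB => by
      simp only [Set.biUnion_union]
      apply hadd
      simp only [Set.disjoint_iUnion_left, Set.disjoint_iUnion_right]
      intro i hi j hj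
      apply hdisj
      rintro rfl
      exact Set.disjoint_left.mp hAB hj hi)
    (fun n => by simpa using (hnull _).mp (hzero n))
  exact (hpos M hM).ne' ((hnull _).mpr hM0)
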